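/- For a subset B of the 12 octahedron edges, let Γ_B be the simple graph on the 14 vertices {T_1,…,T_8,S_1,…,S_6} whose edges are: all 12 cube edges, all 24 pairs {T_i,S_j} with ⟨T_i,S_j⟩ > 0, and the octahedron edges in B. Then among the graphs Γ_B for which every vertex of Γ_B has even degree (equivalently, every point S_j lies on an even number of edges of B), there are exactly 14 graph-isomorphism classes; one class corresponds to the triangular subdivision of the cube, one corresponds to the monohedral tiling B𝒪, and the remaining 12 classes correspond to the dihedral f-tilings whose prototiles are the Möbius triangle and an isosceles triangle derived from B𝒪 by b-edge assignments. -/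

import Mathlib

open Matrix

attribute [local instance] Classical.propDecidable

/-- `τ = (2√2+1)/7`. -/
noncomputable def tau : ℝ := (2 * Real.sqrt 2 + 1) / 7

/-- The 14 vertices: `pt 0,…,pt 7` are the cube points `T_1,…,T_8`; `pt 8,…,pt 13`
are the octahedron points `S_1,…,S_6`. -/
noncomputable def pt : Fin 14 → Fin 3 → ℝ :=
  ![tau • ![1, 1, 1], tau • ![-1, 1, 1], tau • ![-1, -1, 1], tau • ![1, -1, 1],
    tau • ![1, 1, -1], tau • ![-1, 1, -1], tau • ![-1, -1, -1], tau • ![1, -1, -1],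
    ![0, 0, 1], ![1, 0, 0], ![0, 1, 0], ![-1, 0, 0], ![0, -1, 0], ![0, 0, -1]]

/-- The 12 cube edges: pairs `{T_i, T_k}` differing in exactly one coordinate. -/
noncomputable def cubeEdges : Finset (Sym2 (Fin 14)) :=
  Finset.univ.filter fun e => ∃ u v : Fin 14, u.val < 8 ∧ v.val < 8 ∧ e = s(u, v) ∧
    (Finset.univ.filter fun c : Fin 3 => pt u c ≠ pt v c).card = 1

/-- The 12 octahedron edges: pairs `{S_j, S_l}` with `⟨S_j, S_l⟩ = 0`. -/
noncomputable def octEdges : Finset (Sym2 (Fin 14)) :=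
  Finset.univ.filter fun e => ∃ u v : Fin 14, 8 ≤ u.val ∧ 8 ≤ v.val ∧ e = s(u, v) ∧
    pt u ⬝ᵥ pt v = 0

/-- The 24 pairs `{T_i, S_j}` with `⟨T_i, S_j⟩ > 0`, as unordered pairs. -/
noncomputable def candEdges : Finset (Sym2 (Fin 14)) :=
  (Finset.univ.filter fun p : Fin 14 × Fin 14 =>
    p.1.val < 8 ∧ 8 ≤ p.2.val ∧ 0 < pt p.1 ⬝ᵥ pt p.2).image fun p => s(p.1, p.2)

/-- The simple graph `Γ_B` on the 14 vertices whose edges are the 12 cube edges, the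
24 pairs `{T_i, S_j}` with `⟨T_i, S_j⟩ > 0`, and the octahedron edges in `B`. -/
noncomputable def Γ (B : Finset (Sym2 (Fin 14))) : SimpleGraph (Fin 14) :=
  SimpleGraph.fromEdgeSet ↑(cubeEdges ∪ candEdges ∪ B)

/-- `B` is a subset of the octahedron edges for which every vertex of `Γ_B` has even
degree. -/
noncomputable def Good (B : Finset (Sym2 (Fin 14))) : Prop :=
  B ⊆ octEdges ∧ ∀ v : Fin 14, Even ((Γ B).degree v)

/-- Graph isomorphism between `Γ_B` and `Γ_{B'}`. -/
noncomputable def isoRel (B B' : {B : Finset (Sym2 (Fin 14)) // Good B}) : Prop :=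
  Nonempty (Γ B.1 ≃g Γ B'.1)

/-!
Scaling the points does not change signs of inner products, so `Γ_B` can be read off from integer
vectors. The even subgraphs of the octahedron are the mod 2 boundaries of sets of its faces, because
the sphere has no first homology mod 2, and complementary sets of faces have the same boundary. The
faces lie under the cube points, so the good `B` are the 2-colourings of the cube points up to
exchanging the colours. Adding one cube point at a time shows that every set of at most four cube
points is carried by a cube symmetry to one of 14 representatives. The corresponding graphs are
pairwise non-isomorphic because their numbers of closed walks of length 5, that is, the traces of
the fifth powers of their adjacency matrices, are all different.
-/

open Finset

section GraphTheory

variable {V W : Type*} [Fintype V]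

theorem degree_sup_of_disjoint {G H : SimpleGraph V} [DecidableRel G.Adj] [DecidableRel H.Adj]
    [DecidableRel (G ⊔ H).Adj] (h : Disjoint G H) (v : V) :
    (G ⊔ H).degree v = G.degree v + H.degree v := by
  simp only [← SimpleGraph.card_neighborFinset_eq_degree,
    SimpleGraph.neighborFinset_sup_of_disjoint _ h, Finset.card_disjUnion]

theorem degree_fromEdgeSet [DecidableEq V] (B : Finset (Sym2 V)) (hB : ∀ e ∈ B, ¬ e.IsDiag)
    [DecidableRel (SimpleGraph.fromEdgeSet (B : Set (Sym2 V))).Adj] (v : V) :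
    (SimpleGraph.fromEdgeSet (B : Set (Sym2 V))).degree v = #{e ∈ B | v ∈ e} := by
  rw [← SimpleGraph.card_incidenceFinset_eq_degree]
  congr 1
  ext e
  simp only [SimpleGraph.mem_incidenceFinset, SimpleGraph.incidenceSet,
    SimpleGraph.edgeSet_fromEdgeSet, Set.mem_sdiff, Finset.mem_coe, mem_filter]
  exact and_congr_left fun _ => and_iff_left_of_imp (hB e)

theorem trace_adjMatrix_pow_eq_of_iso [Fintype W] [DecidableEq V] [DecidableEq W]
    (R : Type*) [Semiring R] {G : SimpleGraph V} {H : SimpleGraph W} [DecidableRel G.Adj]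
    [DecidableRel H.Adj] (φ : G ≃g H) (n : ℕ) :
    (G.adjMatrix R ^ n).trace = (H.adjMatrix R ^ n).trace := by
  have hpow : (G.adjMatrix R ^ n).reindex φ.toEquiv φ.toEquiv = H.adjMatrix R ^ n := by
    rw [← φ.reindex_adjMatrix R]
    exact map_pow (reindexRingEquiv R φ.toEquiv) (G.adjMatrix R) n
  rw [← hpow]
  exact (Equiv.sum_comp φ.symm.toEquiv fun v => (G.adjMatrix R ^ n) v v).symm

end GraphTheory

theorem natCard_quot_eq_of_transversal {α ι : Type*} {r : α → α → Prop} (hr : Equivalence r)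
    (f : ι → α) (hinj : ∀ i j, r (f i) (f j) → i = j) (hsurj : ∀ a, ∃ i, r (f i) a) :
    Nat.card (Quot r) = Nat.card ι := by
  refine (Nat.card_eq_of_bijective (fun i => Quot.mk r (f i)) ⟨fun i j hij => ?_, ?_⟩).symm
  · exact hinj i j ((hr.quot_mk_eq_iff _ _).1 hij)
  · rintro ⟨a⟩
    exact (hsurj a).imp fun i hi => Quot.sound hi

/-- Integer directions of the 14 points: each point is a positive multiple (`τ` for the cube points,
`1` for the octahedron points) of its direction. -/
def direction : Fin 14 → Fin 3 → ℤ :=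
  ![![1, 1, 1], ![-1, 1, 1], ![-1, -1, 1], ![1, -1, 1],
    ![1, 1, -1], ![-1, 1, -1], ![-1, -1, -1], ![1, -1, -1],
    ![0, 0, 1], ![1, 0, 0], ![0, 1, 0], ![-1, 0, 0], ![0, -1, 0], ![0, 0, -1]]

/-- Inner product of the directions of two points; it has the sign of `⟨pt u, pt v⟩`. -/
def dirDot (u v : Fin 14) : ℤ := direction u ⬝ᵥ direction v

theorem dirDot_comm (u v : Fin 14) : dirDot u v = dirDot v u := dotProduct_comm _ _

theorem dirDot_self_ne_zero : ∀ u, dirDot u u ≠ 0 := by decide +kernel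

/-- The indices of the cube points, which also index the faces of the octahedron: the cube point in
direction `s` stands for the face whose outer normal is `s`. -/
def cubePoints : Finset (Fin 14) := Iio 8

theorem mem_cubePoints_iff_dirDot_self : ∀ u, u ∈ cubePoints ↔ dirDot u u = 3 := by
  decide +kernel

/-- The part common to all `Γ_B`: the cube edges and the edges from cube to octahedron points. -/
def frame : SimpleGraph (Fin 14) where
  Adj u v := u ≠ v ∧ dirDot u v = 1
  symm := ⟨fun u v h => ⟨h.1.symm, dirDot_comm u v ▸ h.2⟩⟩
  loopless := ⟨fun _ h => h.1 rfl⟩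

/-- The graph of all 12 octahedron edges. -/
def octahedron : SimpleGraph (Fin 14) where
  Adj u v := dirDot u v = 0
  symm := ⟨fun u v h => (dirDot_comm v u).trans h⟩
  loopless := ⟨dirDot_self_ne_zero⟩

instance : DecidableRel frame.Adj := fun u v =>
  inferInstanceAs (Decidable (u ≠ v ∧ dirDot u v = 1))

instance : DecidableRel octahedron.Adj := fun u v =>
  inferInstanceAs (Decidable (dirDot u v = 0))

theorem frame_adj {u v : Fin 14} : frame.Adj u v ↔ u ≠ v ∧ dirDot u v = 1 := Iff.rfl

theorem octahedron_adj {u v : Fin 14} : octahedron.Adj u v ↔ dirDot u v = 0 := Iff.rfl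

theorem even_degree_frame : ∀ u, Even (frame.degree u) := by decide +kernel

theorem disjoint_frame_octahedron : Disjoint frame octahedron := by
  rw [SimpleGraph.disjoint_left]
  exact fun u v h h0 => one_ne_zero (h.2.symm.trans h0)

theorem le_val_of_octahedron_adj : ∀ u v, octahedron.Adj u v → 8 ≤ u.val := by decide +kernel

/-- The faces in `F` that contain both octahedron points `u` and `v`. -/
def edgeFaces (F : Finset (Fin 14)) (u v : Fin 14) : Finset (Fin 14) :=
  {s ∈ F | dirDot s u = 1 ∧ dirDot s v = 1}

theorem edgeFaces_comm (F : Finset (Fin 14)) (u v : Fin 14) :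
    edgeFaces F u v = edgeFaces F v u := by
  simp only [edgeFaces, and_comm]

/-- The mod 2 boundary of the set of faces `F`: the octahedron edges on an odd number of them. -/
def boundaryGraph (F : Finset (Fin 14)) : SimpleGraph (Fin 14) where
  Adj u v := octahedron.Adj u v ∧ Odd #(edgeFaces F u v)
  symm := ⟨fun u v h => ⟨h.1.symm, edgeFaces_comm F u v ▸ h.2⟩⟩
  loopless := ⟨fun _ h => octahedron.irrefl h.1⟩

instance (F : Finset (Fin 14)) : DecidableRel (boundaryGraph F).Adj := fun u v =>
  inferInstanceAs (Decidable (octahedron.Adj u v ∧ Odd #(edgeFaces F u v)))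

theorem boundaryGraph_adj {F : Finset (Fin 14)} {u v : Fin 14} :
    (boundaryGraph F).Adj u v ↔ octahedron.Adj u v ∧ Odd #(edgeFaces F u v) := Iff.rfl

theorem boundaryGraph_le_octahedron (F : Finset (Fin 14)) : boundaryGraph F ≤ octahedron :=
  fun _ _ h => h.1

theorem card_edgeFaces_cubePoints : ∀ u v, octahedron.Adj u v →
    #(edgeFaces cubePoints u v) = 2 := by
  decide +kernel

theorem boundaryGraph_sdiff {F : Finset (Fin 14)} (hF : F ⊆ cubePoints) :
    boundaryGraph (cubePoints \ F) = boundaryGraph F := by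
  ext u v
  refine and_congr_right fun huv => ?_
  have hsum : #(edgeFaces (cubePoints \ F) u v) + #(edgeFaces F u v) = 2 := by
    simp only [← card_edgeFaces_cubePoints u v huv, edgeFaces]
    rw [← card_union_of_disjoint (disjoint_filter_filter sdiff_disjoint), ← filter_union,
      sdiff_union_of_subset hF]
  grind

theorem even_card_octahedron_neighbors_on_face : ∀ u s, dirDot s u = 1 →
    Even #{v | octahedron.Adj u v ∧ dirDot s v = 1} := by
  decide +kernel

theorem sum_card_edgeFaces (F : Finset (Fin 14)) (u : Fin 14) :
    ∑ v with octahedron.Adj u v, #(edgeFaces F u v) =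
      ∑ s ∈ F with dirDot s u = 1, #{v | octahedron.Adj u v ∧ dirDot s v = 1} := by
  simpa only [edgeFaces, bipartiteAbove, bipartiteBelow, filter_filter] using
    sum_card_bipartiteAbove_eq_sum_card_bipartiteBelow (s := {v | octahedron.Adj u v})
      (t := {s ∈ F | dirDot s u = 1}) fun v s => dirDot s v = 1

theorem even_degree_boundaryGraph (F : Finset (Fin 14)) (u : Fin 14) :
    Even ((boundaryGraph F).degree u) := by
  rw [← SimpleGraph.card_neighborFinset_eq_degree, SimpleGraph.neighborFinset_eq_filter]
  simp only [boundaryGraph_adj]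
  rw [← filter_filter, ← even_sum_iff_even_card_odd, sum_card_edgeFaces]
  exact even_sum _ fun s hs => even_card_octahedron_neighbors_on_face u s (mem_filter.1 hs).2

theorem boundaryGraph_adj_iff_sum_eq_one {f : Fin 14 → ZMod 2} {u v : Fin 14}
    (huv : octahedron.Adj u v) :
    (boundaryGraph {s ∈ cubePoints | f s = 1}).Adj u v ↔
      ∑ s ∈ edgeFaces cubePoints u v, f s = 1 := by
  have hindicator (a : ZMod 2) : a = if a = 1 then 1 else 0 := by decide +revert
  have hsum : ∑ s ∈ edgeFaces cubePoints u v, f s =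
      (#(edgeFaces {s ∈ cubePoints | f s = 1} u v) : ZMod 2) := by
    rw [sum_congr rfl fun s _ => hindicator (f s), sum_boole, edgeFaces, edgeFaces, filter_comm]
  rw [hsum, ZMod.natCast_eq_one_iff_odd, boundaryGraph_adj, and_iff_right huv]

theorem mem_octahedron_edge_list : ∀ u v, octahedron.Adj u v → u < v →
    (u, v, edgeFaces cubePoints u v) ∈
      ([(8, 9, {0, 3}), (8, 10, {0, 1}), (8, 11, {1, 2}), (8, 12, {2, 3}),
        (9, 10, {0, 4}), (10, 11, {1, 5}), (11, 12, {2, 6}), (9, 12, {3, 7}),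
        (9, 13, {4, 7}), (10, 13, {4, 5}), (11, 13, {5, 6}), (12, 13, {6, 7})] :
        List (Fin 14 × Fin 14 × Finset (Fin 14))) := by
  decide +kernel

theorem octahedron_neighborFinset : ∀ u, octahedron.neighborFinset u =
    (![∅, ∅, ∅, ∅, ∅, ∅, ∅, ∅, {9, 10, 11, 12}, {8, 10, 12, 13}, {8, 9, 11, 13},
      {8, 10, 12, 13}, {8, 9, 11, 13}, {9, 10, 11, 12}] : Fin 14 → Finset (Fin 14)) u := by
  decide +kernel

theorem exists_forall_eq_sum_edgeFaces {x : Matrix (Fin 14) (Fin 14) (ZMod 2)} (hsymm : x.IsSymm)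
    (hrow : ∀ u, ∑ v ∈ octahedron.neighborFinset u, x u v = 0) :
    ∃ f : Fin 14 → ZMod 2, ∀ u v, octahedron.Adj u v →
      x u v = ∑ s ∈ edgeFaces cubePoints u v, f s := by
  -- `f s` is the sum of `x` over the edges crossed by a path of faces from face `0` to face `s`.
  let f : Fin 14 → ZMod 2 := ![0, x 8 10, x 8 10 + x 8 11, x 8 9, x 9 10, x 8 10 + x 10 11,
    x 8 10 + x 8 11 + x 11 12, x 8 9 + x 9 12, 0, 0, 0, 0, 0, 0]
  refine ⟨f, fun u v huv => ?_⟩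
  wlog hlt : u < v generalizing u v
  · rw [edgeFaces_comm, ← this v u huv.symm (lt_of_le_of_ne (not_lt.1 hlt) huv.ne'), hsymm.apply]
  have h8 : x 8 9 + x 8 10 + x 8 11 + x 8 12 = 0 := by
    simpa [octahedron_neighborFinset, add_assoc] using hrow 8
  have h9 : x 9 8 + x 9 10 + x 9 12 + x 9 13 = 0 := by
    simpa [octahedron_neighborFinset, add_assoc] using hrow 9
  have h10 : x 10 8 + x 10 9 + x 10 11 + x 10 13 = 0 := by
    simpa [octahedron_neighborFinset, add_assoc] using hrow 10
  have h11 : x 11 8 + x 11 10 + x 11 12 + x 11 13 = 0 := by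
    simpa [octahedron_neighborFinset, add_assoc] using hrow 11
  have h12 : x 12 8 + x 12 9 + x 12 11 + x 12 13 = 0 := by
    simpa [octahedron_neighborFinset, add_assoc] using hrow 12
  have hcomm := hsymm.apply
  have hmem := mem_octahedron_edge_list u v huv hlt
  generalize edgeFaces cubePoints u v = F at hmem ⊢
  fin_cases hmem <;>
    simp only [f, sum_insert, mem_singleton, Fin.reduceEq, not_false_eq_true, sum_singleton,
      Fin.isValue, Matrix.cons_val] <;>
    grind

theorem exists_boundaryGraph_eq {H : SimpleGraph (Fin 14)} [DecidableRel H.Adj]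
    (hH : H ≤ octahedron) (heven : ∀ u, Even (H.degree u)) :
    ∃ F ⊆ cubePoints, boundaryGraph F = H := by
  have hrow (u : Fin 14) : ∑ v ∈ octahedron.neighborFinset u, H.adjMatrix (ZMod 2) u v = 0 := by
    have hnbr : {v ∈ octahedron.neighborFinset u | H.Adj u v} = H.neighborFinset u := by
      ext v
      simpa using @hH u v
    simp only [SimpleGraph.adjMatrix_apply, sum_boole, hnbr]
    exact ZMod.natCast_eq_zero_iff_even.2 (heven u)
  obtain ⟨f, hf⟩ := exists_forall_eq_sum_edgeFaces H.isSymm_adjMatrix hrow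
  refine ⟨{s ∈ cubePoints | f s = 1}, filter_subset _ _, ?_⟩
  ext u v
  by_cases huv : octahedron.Adj u v
  · rw [boundaryGraph_adj_iff_sum_eq_one huv, ← hf u v huv, SimpleGraph.adjMatrix_apply]
    simp
  · exact iff_of_false (mt (@boundaryGraph_le_octahedron _ u v) huv) (mt (@hH u v) huv)

/-- The graph `Γ_B` for `B` the mod 2 boundary of the set of faces `F`. -/
def tiling (F : Finset (Fin 14)) : SimpleGraph (Fin 14) := frame ⊔ boundaryGraph F

instance (F : Finset (Fin 14)) : DecidableRel (tiling F).Adj :=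
  inferInstanceAs (DecidableRel (frame ⊔ boundaryGraph F).Adj)

theorem eq_of_forall_dirDot_eq : ∀ u v, (∀ w, dirDot u w = dirDot v w) → u = v := by
  decide +kernel

/-- Self-maps of the points that preserve the inner products of their directions, that is, those
induced by orthogonal symmetries of the cube. -/
def IsSymmetry (g : Fin 14 → Fin 14) : Prop := ∀ u v, dirDot (g u) (g v) = dirDot u v

namespace IsSymmetry

variable {g h : Fin 14 → Fin 14}

instance : DecidablePred IsSymmetry := fun g =>
  inferInstanceAs (Decidable (∀ u v, dirDot (g u) (g v) = dirDot u v))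

protected theorem id : IsSymmetry _root_.id := fun _ _ => rfl

protected theorem comp (hg : IsSymmetry g) (hh : IsSymmetry h) : IsSymmetry (g ∘ h) :=
  fun u v => (hg _ _).trans (hh u v)

protected theorem iterate (hg : IsSymmetry g) : ∀ n, IsSymmetry g^[n]
  | 0 => .id
  | n + 1 => (hg.iterate n).comp hg

protected theorem injective (hg : IsSymmetry g) : Function.Injective g := fun u v huv =>
  eq_of_forall_dirDot_eq u v fun w => by rw [← hg u w, huv, hg]

theorem mem_cubePoints_iff (hg : IsSymmetry g) (u : Fin 14) :
    g u ∈ cubePoints ↔ u ∈ cubePoints := by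
  rw [mem_cubePoints_iff_dirDot_self, mem_cubePoints_iff_dirDot_self, hg]

theorem card_edgeFaces_image (hg : IsSymmetry g) (F : Finset (Fin 14)) (u v : Fin 14) :
    #(edgeFaces (F.image g) (g u) (g v)) = #(edgeFaces F u v) := by
  simp only [edgeFaces, filter_image, card_image_of_injective _ hg.injective, hg _ _]

theorem tiling_image_adj (hg : IsSymmetry g) (F : Finset (Fin 14)) (u v : Fin 14) :
    (tiling (F.image g)).Adj (g u) (g v) ↔ (tiling F).Adj u v := by
  simp only [tiling, SimpleGraph.sup_adj, frame_adj, boundaryGraph_adj, octahedron_adj,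
    hg.injective.ne_iff, hg _ _, hg.card_edgeFaces_image]

/-- The isomorphism of tilings induced by a symmetry. -/
noncomputable def tilingIso (hg : IsSymmetry g) (F : Finset (Fin 14)) :
    tiling F ≃g tiling (F.image g) where
  toEquiv := Equiv.ofBijective g (Finite.injective_iff_bijective.1 hg.injective)
  map_rel_iff' := hg.tiling_image_adj F _ _

end IsSymmetry

/-- The permutation of the points induced by `(x, y, z) ↦ (-y, x, z)`. -/
def quarterTurn : Fin 14 → Fin 14 := ![1, 2, 3, 0, 5, 6, 7, 4, 8, 10, 11, 12, 9, 13]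

/-- The permutation of the points induced by `(x, y, z) ↦ (x, -y, -z)`. -/
def halfTurn : Fin 14 → Fin 14 := ![7, 6, 5, 4, 3, 2, 1, 0, 13, 9, 12, 11, 10, 8]

/-- The permutation of the points induced by `(x, y, z) ↦ (-z, -x, -y)`. -/
def rotoinversion : Fin 14 → Fin 14 := ![6, 5, 1, 2, 7, 4, 0, 3, 11, 12, 13, 10, 8, 9]

/-- A normal form for the cube symmetries: each of the 48 occurs once for `i < 4`, `j < 2`,
`k < 6`. -/
def cubeSymmetry (i j k : ℕ) : Fin 14 → Fin 14 :=
  quarterTurn^[i] ∘ halfTurn^[j] ∘ rotoinversion^[k]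

theorem isSymmetry_cubeSymmetry (i j k : ℕ) : IsSymmetry (cubeSymmetry i j k) :=
  have hquarter : IsSymmetry quarterTurn := by decide +kernel
  have hhalf : IsSymmetry halfTurn := by decide +kernel
  have hroto : IsSymmetry rotoinversion := by decide +kernel
  (hquarter.iterate i).comp ((hhalf.iterate j).comp (hroto.iterate k))

/-- One set of faces for each of the 14 classes of bipartitions of the faces of the octahedron under
the cube symmetries. -/
def representative : Fin 14 → Finset (Fin 14) :=
  ![∅, {0}, {0, 1}, {0, 2}, {0, 6}, {0, 1, 2}, {0, 1, 6}, {0, 2, 5}, {0, 1, 2, 3}, {0, 1, 2, 5},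
    {0, 1, 2, 6}, {0, 1, 2, 7}, {0, 1, 6, 7}, {0, 2, 5, 7}]

theorem exists_cubeSymmetry_mapsTo_representative : ∀ n, #(representative n) ≤ 3 →
    ∀ t ∈ cubePoints \ representative n, ∃ m, #(representative m) = #(representative n) + 1 ∧
      ∃ i < 4, ∃ j < 2, ∃ k < 6, ∀ s ∈ insert t (representative n),
        cubeSymmetry i j k s ∈ representative m := by
  decide +kernel

theorem exists_symmetry_image_insert_representative {n t : Fin 14}
    (hn : #(representative n) ≤ 3) (ht : t ∈ cubePoints \ representative n) :
    ∃ g, IsSymmetry g ∧ ∃ m, (insert t (representative n)).image g = representative m := by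
  obtain ⟨m, hm, i, -, j, -, k, -, hmaps⟩ := exists_cubeSymmetry_mapsTo_representative n hn t ht
  have hg := isSymmetry_cubeSymmetry i j k
  refine ⟨_, hg, m, eq_of_subset_of_card_le (image_subset_iff.2 hmaps) ?_⟩
  rw [card_image_of_injective _ hg.injective, card_insert_of_notMem (mem_sdiff.1 ht).2, hm]

theorem exists_symmetry_image_eq_representative {F : Finset (Fin 14)} (hF : F ⊆ cubePoints)
    (hcard : #F ≤ 4) : ∃ g, IsSymmetry g ∧ ∃ n, F.image g = representative n := by
  induction F using Finset.induction_on with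
  | empty => exact ⟨id, .id, 0, rfl⟩
  | insert t F htF ih =>
    rw [insert_subset_iff] at hF
    rw [card_insert_of_notMem htF] at hcard
    obtain ⟨g, hg, n, hgn⟩ := ih hF.2 (by lia)
    have hn : #(representative n) ≤ 3 := by
      rw [← hgn, card_image_of_injective _ hg.injective]
      lia
    have ht : g t ∈ cubePoints \ representative n := by
      rw [mem_sdiff, hg.mem_cubePoints_iff, ← hgn, hg.injective.mem_finset_image]
      exact ⟨hF.1, htF⟩
    obtain ⟨h, hh, m, hhm⟩ := exists_symmetry_image_insert_representative hn ht
    refine ⟨h ∘ g, hh.comp hg, m, ?_⟩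
    rw [← image_image, image_insert, hgn, hhm]

theorem exists_representative_iso {F : Finset (Fin 14)} (hF : F ⊆ cubePoints) :
    ∃ n, Nonempty (tiling (representative n) ≃g tiling F) := by
  wlog hcard : #F ≤ 4 generalizing F
  · have hcard' : #(cubePoints \ F) ≤ 4 := by
      rw [card_sdiff_of_subset hF, show #cubePoints = 8 from rfl]
      lia
    simpa only [tiling, boundaryGraph_sdiff hF] using this sdiff_subset hcard'
  obtain ⟨g, hg, n, hgn⟩ := exists_symmetry_image_eq_representative hF hcard
  exact ⟨n, ⟨(hgn ▸ hg.tilingIso F).symm⟩⟩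

theorem trace_adjMatrix_tiling_representative : ∀ n,
    ((tiling (representative n)).adjMatrix ℕ ^ 5).trace =
      ![4080, 6090, 6600, 8580, 8100, 7210, 9110, 11970, 6560, 7800, 7840, 10440, 10160,
        16800] n := by
  decide +kernel

theorem representative_eq_of_iso {m n : Fin 14}
    (h : Nonempty (tiling (representative m) ≃g tiling (representative n))) : m = n := by
  obtain ⟨φ⟩ := h
  have htrace := trace_adjMatrix_pow_eq_of_iso ℕ φ 5
  simp only [trace_adjMatrix_tiling_representative] at htrace
  decide +revert

theorem frame_adj_iff_cube_or_spoke : ∀ u v, frame.Adj u v ↔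
    (u.val < 8 ∧ v.val < 8 ∧ #{c | direction u c ≠ direction v c} = 1) ∨
      (u.val < 8 ∧ 8 ≤ v.val ∧ 0 < dirDot u v) ∨ (v.val < 8 ∧ 8 ≤ u.val ∧ 0 < dirDot v u) := by
  decide +kernel

theorem tau_pos : 0 < tau := by
  unfold tau
  positivity

/-- The distance factor from `direction u` to `pt u`. -/
noncomputable def scale (u : Fin 14) : ℝ := if u.val < 8 then tau else 1

theorem scale_pos (u : Fin 14) : 0 < scale u := by
  unfold scale
  split_ifs
  exacts [tau_pos, one_pos]

theorem pt_apply (u : Fin 14) (c : Fin 3) : pt u c = scale u * direction u c := by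
  fin_cases u <;> fin_cases c <;> simp [pt, scale, direction]

theorem pt_dotProduct_pt (u v : Fin 14) : pt u ⬝ᵥ pt v = scale u * scale v * dirDot u v := by
  simp only [dotProduct, pt_apply, dirDot, Int.cast_sum, Int.cast_mul, mul_sum]
  exact sum_congr rfl fun c _ => by ring

theorem pt_dotProduct_pt_eq_zero_iff {u v : Fin 14} : pt u ⬝ᵥ pt v = 0 ↔ dirDot u v = 0 := by
  simp [pt_dotProduct_pt, (scale_pos _).ne']

theorem pt_dotProduct_pt_pos_iff {u v : Fin 14} : 0 < pt u ⬝ᵥ pt v ↔ 0 < dirDot u v := by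
  rw [pt_dotProduct_pt, mul_pos_iff_of_pos_left (mul_pos (scale_pos u) (scale_pos v)), Int.cast_pos]

theorem mem_octEdges_iff {u v : Fin 14} : s(u, v) ∈ octEdges ↔ octahedron.Adj u v := by
  simp only [octEdges, mem_filter_univ, pt_dotProduct_pt_eq_zero_iff]
  constructor
  · rintro ⟨a, b, -, -, huv, hab : octahedron.Adj a b⟩
    rwa [← SimpleGraph.mem_edgeSet, huv]
  · intro h
    exact ⟨u, v, le_val_of_octahedron_adj u v h, le_val_of_octahedron_adj v u h.symm, rfl, h⟩

theorem mem_cubeEdges_iff {u v : Fin 14} : s(u, v) ∈ cubeEdges ↔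
    u.val < 8 ∧ v.val < 8 ∧ #{c | direction u c ≠ direction v c} = 1 := by
  have hcard {a b : Fin 14} (ha : a.val < 8) (hb : b.val < 8) :
      #{c | pt a c ≠ pt b c} = #{c | direction a c ≠ direction b c} := by
    simp [pt_apply, scale, ha, hb, tau_pos.ne']
  simp only [cubeEdges, mem_filter_univ]
  constructor
  · rintro ⟨a, b, ha, hb, huv, hab⟩
    rw [hcard ha hb] at hab
    rcases Sym2.eq_iff.1 huv with ⟨rfl, rfl⟩ | ⟨rfl, rfl⟩
    · exact ⟨ha, hb, hab⟩
    · exact ⟨hb, ha, by simpa only [ne_comm] using hab⟩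
  · exact fun ⟨hu, hv, h⟩ => ⟨u, v, hu, hv, rfl, by rwa [hcard hu hv]⟩

theorem mem_candEdges_iff {u v : Fin 14} : s(u, v) ∈ candEdges ↔
    (u.val < 8 ∧ 8 ≤ v.val ∧ 0 < dirDot u v) ∨ (v.val < 8 ∧ 8 ≤ u.val ∧ 0 < dirDot v u) := by
  simp only [candEdges, mem_image, mem_filter_univ, pt_dotProduct_pt_pos_iff, Prod.exists,
    Sym2.eq_iff]
  grind

theorem fromEdgeSet_cubeEdges_union_candEdges :
    SimpleGraph.fromEdgeSet ((cubeEdges ∪ candEdges : Finset (Sym2 (Fin 14))) : Set _) = frame := by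
  ext u v
  rw [SimpleGraph.fromEdgeSet_adj, mem_coe, mem_union, mem_cubeEdges_iff, mem_candEdges_iff]
  convert and_iff_left_of_imp SimpleGraph.Adj.ne
  convert (frame_adj_iff_cube_or_spoke u v).symm

theorem Γ_eq (B : Finset (Sym2 (Fin 14))) : Γ B = frame ⊔ SimpleGraph.fromEdgeSet B := by
  rw [Γ, coe_union, SimpleGraph.fromEdgeSet_union, fromEdgeSet_cubeEdges_union_candEdges]

theorem fromEdgeSet_le_octahedron {B : Finset (Sym2 (Fin 14))} (hB : B ⊆ octEdges) :
    SimpleGraph.fromEdgeSet B ≤ octahedron :=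
  fun _ _ h => mem_octEdges_iff.1 (hB h.1)

theorem not_isDiag_of_mem_octEdges {e : Sym2 (Fin 14)} (he : e ∈ octEdges) : ¬ e.IsDiag := by
  induction e with
  | _ u v => exact (mem_octEdges_iff.1 he).ne

theorem even_degree_Γ_iff {B : Finset (Sym2 (Fin 14))} (hB : B ⊆ octEdges) (u : Fin 14) :
    Even ((Γ B).degree u) ↔
      Even ((SimpleGraph.fromEdgeSet (B : Set (Sym2 (Fin 14)))).degree u) := by
  have hdisj := disjoint_frame_octahedron.mono_right (fromEdgeSet_le_octahedron hB)
  have hdeg : (Γ B).degree u = frame.degree u +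
      (SimpleGraph.fromEdgeSet (B : Set (Sym2 (Fin 14)))).degree u := by
    convert degree_sup_of_disjoint hdisj u
    exact Γ_eq B
  rw [hdeg, Nat.even_add, iff_true_left (even_degree_frame u)]

theorem forall_even_degree_Γ_iff {B : Finset (Sym2 (Fin 14))} (hB : B ⊆ octEdges) :
    (∀ u, Even ((Γ B).degree u)) ↔ ∀ u : Fin 14, 8 ≤ u.val → Even #{e ∈ B | u ∈ e} := by
  have hdeg (u : Fin 14) :=
    degree_fromEdgeSet B (fun e he => not_isDiag_of_mem_octEdges (hB he)) u
  simp only [even_degree_Γ_iff hB]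
  refine ⟨fun h u _ => by simpa only [hdeg] using h u, fun h u => ?_⟩
  rw [hdeg]
  rcases le_or_gt 8 u.val with hu | hu
  · exact h u hu
  · have hempty : {e ∈ B | u ∈ e} = ∅ := by
      refine filter_eq_empty_iff.2 fun e he hue => ?_
      obtain ⟨v, rfl⟩ := hue
      exact hu.not_ge (le_val_of_octahedron_adj u v (mem_octEdges_iff.1 (hB he)))
    rw [hempty]
    exact .zero

theorem Γ_edgeFinset_boundaryGraph (F : Finset (Fin 14)) :
    Γ (boundaryGraph F).edgeFinset = tiling F := by
  rw [Γ_eq, SimpleGraph.coe_edgeFinset, SimpleGraph.fromEdgeSet_edgeSet, tiling]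

theorem good_edgeFinset_boundaryGraph (F : Finset (Fin 14)) :
    Good (boundaryGraph F).edgeFinset := by
  have hsub : (boundaryGraph F).edgeFinset ⊆ octEdges := by
    intro e
    induction e with
    | _ u v => exact fun he => mem_octEdges_iff.2 (SimpleGraph.mem_edgeFinset.1 he).1
  refine ⟨hsub, fun u => (even_degree_Γ_iff hsub u).2 ?_⟩
  convert even_degree_boundaryGraph F u
  rw [SimpleGraph.coe_edgeFinset, SimpleGraph.fromEdgeSet_edgeSet]

theorem exists_tiling_eq_of_good {B : Finset (Sym2 (Fin 14))} (hB : Good B) :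
    ∃ F ⊆ cubePoints, tiling F = Γ B := by
  obtain ⟨F, hF, hFB⟩ := exists_boundaryGraph_eq (fromEdgeSet_le_octahedron hB.1)
    fun u => (even_degree_Γ_iff hB.1 u).1 (hB.2 u)
  exact ⟨F, hF, by rw [tiling, hFB, Γ_eq]⟩

theorem isoRel_equivalence : Equivalence isoRel :=
  ⟨fun _ => ⟨.refl⟩, fun ⟨φ⟩ => ⟨φ.symm⟩, fun ⟨φ⟩ ⟨ψ⟩ => ⟨φ.trans ψ⟩⟩

/-- Among the graphs `Γ_B` with all degrees even (equivalently, every point `S_j`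
lies on an even number of edges of `B`) there are exactly `14` graph-isomorphism
classes; one class corresponds to the triangular subdivision of the cube, one to the
monohedral tiling `B𝒪`, and the remaining `12` classes correspond to the dihedral
f-tilings with prototiles the Möbius triangle and an isosceles triangle derived from
`B𝒪` by `b`-edge assignments. -/
theorem stmt_17 :
    Nat.card (Quot isoRel) = 14 ∧
    ∀ B ⊆ octEdges, ((∀ v : Fin 14, Even ((Γ B).degree v)) ↔
      ∀ u : Fin 14, 8 ≤ u.val → Even (B.filter fun e => u ∈ e).card) := by
  refine ⟨?_, fun B hB => forall_even_degree_Γ_iff hB⟩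
  let f (n : Fin 14) : {B : Finset (Sym2 (Fin 14)) // Good B} :=
    ⟨_, good_edgeFinset_boundaryGraph (representative n)⟩
  have hΓ (n : Fin 14) : Γ (f n).1 = tiling (representative n) := Γ_edgeFinset_boundaryGraph _
  rw [natCard_quot_eq_of_transversal isoRel_equivalence f ?_ ?_, Nat.card_fin]
  · intro m n h
    rw [isoRel, hΓ, hΓ] at h
    exact representative_eq_of_iso h
  · rintro ⟨B, hB⟩
    obtain ⟨F, hF, hFB⟩ := exists_tiling_eq_of_good hB
    simpa only [isoRel, hΓ, ← hFB] using exists_representative_iso hF
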